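/- Let N ≥ 1, p, q ≥ 0, r₁, r₂ ∈ [1,∞), and set P = N(p/r₂ − 1/r₁), Q = N(q/r₁ − 1/r₂). Assume 0 < max{P,Q} ≤ 2 and let 1 < r ≤ min{r₁,r₂}. Then there exists σ* > 1 such that for every σ ∈ (1, σ*] there exist positive constants γ₁, T₁ and C (independent of the data) with the following property: for all nonnegative measurable u₀, v₀ on ℝ^N with |||u₀|||_{r₁,1} < ∞ and |||v₀|||_{r₂,1} < ∞, setting W₀ = u₀^{r₁} + v₀^{r₂}, if |||W₀|||_{1,ρ} ≤ γ₁ ρ^{N(1 − 2/max{P,Q})} for some ρ > 0, then the system (S) possesses a solution (u,v) on ℝ^N × (0, min{ρ², T₁}] satisfying 0 ≤ u(x,t)^{r₁} + v(x,t)^{r₂} ≤ C [S(t)W₀^{σ/r}](x)^{r/σ} + C for a.e. x ∈ ℝ^N and all t ∈ (0, min{ρ², T₁}]. -/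

import Mathlib

open MeasureTheory ENNReal Filter

noncomputable section

/-- Euclidean space `ℝ^N`. -/
abbrev Euc (N : ℕ) := EuclideanSpace ℝ (Fin N)

/-- The heat semigroup applied to a (nonnegative) function `φ` on `ℝ^N`, with values in `[0,∞]`:
`[S(t)φ](x) = ∫ (4πt)^{-N/2} exp(-|x-y|²/(4t)) φ(y) dy`. -/
noncomputable def heatS (N : ℕ) (t : ℝ) (φ : Euc N → ℝ) (x : Euc N) : ℝ≥0∞ :=
  ∫⁻ y, ENNReal.ofReal
    ((4 * Real.pi * t) ^ (-(N : ℝ) / 2) * Real.exp (-‖x - y‖ ^ 2 / (4 * t)) * φ y)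

/-- The `L^∞` norm of `S(t)φ` on `ℝ^N`. -/
noncomputable def heatSup (N : ℕ) (t : ℝ) (φ : Euc N → ℝ) : ℝ≥0∞ :=
  essSup (heatS N t φ) volume

/-- The `L^{r,∞}(E)` quasinorm: for `1 < r < ∞` it is
`sup_{λ>0} λ |{x ∈ E : |f x| > λ}|^{1/r}`; for `r = 1` (resp. `r = ∞`)
it is the usual `L¹(E)` (resp. `L^∞(E)`) norm. -/
noncomputable def wnorm (N : ℕ) (r : ℝ≥0∞) (f : Euc N → ℝ) (E : Set (Euc N)) : ℝ≥0∞ :=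
  if r = 1 then ∫⁻ x in E, ENNReal.ofReal |f x|
  else if r = ⊤ then essSup (fun x => ENNReal.ofReal |f x|) (volume.restrict E)
  else ⨆ (l : ℝ) (_ : 0 < l), ENNReal.ofReal l * (volume {x ∈ E | l < |f x|}) ^ (1 / r.toReal)

/-- The uniformly local quasinorm `|||f|||_{r,ρ} = sup_x ‖f‖_{L^{r,∞}(B(x,ρ))}`
(for `r = ∞` it is the `L^∞(ℝ^N)` norm). -/
noncomputable def ulocNorm (N : ℕ) (r : ℝ≥0∞) (ρ : ℝ) (f : Euc N → ℝ) : ℝ≥0∞ :=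
  if r = ⊤ then essSup (fun x => ENNReal.ofReal |f x|) volume
  else ⨆ x : Euc N, wnorm N r f (Metric.ball x ρ)

/-- `u ∈ L^∞(τ, T-τ; L^∞(ℝ^N))` for every `τ ∈ (0, T/2)`. -/
def LocBdd (N : ℕ) (T : ℝ≥0∞) (u : Euc N → ℝ → ℝ) : Prop :=
  ∀ τ : ℝ, 0 < τ → ENNReal.ofReal (2 * τ) < T →
    ∃ M : ℝ, ∀ t : ℝ, τ ≤ t → ENNReal.ofReal (t + τ) ≤ T →
      ∀ᵐ x ∂(volume : Measure (Euc N)), |u x t| ≤ M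

/-- Regularity requirements on a pair `(u,v)`: nonnegativity, joint measurability and
uniform boundedness away from `t = 0` and `t = T`. -/
def PairRegular (N : ℕ) (T : ℝ≥0∞) (u v : Euc N → ℝ → ℝ) : Prop :=
  (∀ x t, 0 ≤ u x t) ∧ (∀ x t, 0 ≤ v x t) ∧
  Measurable (Function.uncurry u) ∧ Measurable (Function.uncurry v) ∧
  LocBdd N T u ∧ LocBdd N T v

/-- The Duhamel identities for the system (S) `∂ₜu = Δu + v^p`, `∂ₜv = Δv + u^q` at time `t`. -/
def DuhamelSys (N : ℕ) (p q : ℝ) (u₀ v₀ : Euc N → ℝ) (u v : Euc N → ℝ → ℝ) (t : ℝ) : Prop :=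
  (∀ᵐ x ∂(volume : Measure (Euc N)), ENNReal.ofReal (u x t) =
      heatS N t u₀ x + ∫⁻ s in Set.Ioo 0 t, heatS N (t - s) (fun y => v y s ^ p) x) ∧
  (∀ᵐ x ∂(volume : Measure (Euc N)), ENNReal.ofReal (v x t) =
      heatS N t v₀ x + ∫⁻ s in Set.Ioo 0 t, heatS N (t - s) (fun y => u y s ^ q) x)

/-- The Duhamel inequalities (`≥`, with finite left-hand side) for the system (S) at time `t`. -/
def DuhamelSuperSys (N : ℕ) (p q : ℝ) (u₀ v₀ : Euc N → ℝ) (u v : Euc N → ℝ → ℝ) (t : ℝ) : Prop :=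
  (∀ᵐ x ∂(volume : Measure (Euc N)),
      heatS N t u₀ x + (∫⁻ s in Set.Ioo 0 t, heatS N (t - s) (fun y => v y s ^ p) x) ≤
        ENNReal.ofReal (u x t)) ∧
  (∀ᵐ x ∂(volume : Measure (Euc N)),
      heatS N t v₀ x + (∫⁻ s in Set.Ioo 0 t, heatS N (t - s) (fun y => u y s ^ q) x) ≤
        ENNReal.ofReal (v x t))

/-- `(u,v)` is a solution of the system (S) on `ℝ^N × (0,T)`. -/
def IsSolSys (N : ℕ) (p q : ℝ) (u₀ v₀ : Euc N → ℝ) (T : ℝ≥0∞) (u v : Euc N → ℝ → ℝ) : Prop :=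
  PairRegular N T u v ∧
  ∀ t : ℝ, 0 < t → ENNReal.ofReal t < T → DuhamelSys N p q u₀ v₀ u v t

/-- `(u,v)` is a supersolution of the system (S) on `ℝ^N × (0,T)`. -/
def IsSuperSys (N : ℕ) (p q : ℝ) (u₀ v₀ : Euc N → ℝ) (T : ℝ≥0∞) (u v : Euc N → ℝ → ℝ) : Prop :=
  PairRegular N T u v ∧
  ∀ t : ℝ, 0 < t → ENNReal.ofReal t < T → DuhamelSuperSys N p q u₀ v₀ u v t

/-- `(u,v)` is the minimal solution of the system (S) on `ℝ^N × (0,T)`. -/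
def IsMinSolSys (N : ℕ) (p q : ℝ) (u₀ v₀ : Euc N → ℝ) (T : ℝ≥0∞)
    (u v : Euc N → ℝ → ℝ) : Prop :=
  IsSolSys N p q u₀ v₀ T u v ∧
  ∀ u' v' : Euc N → ℝ → ℝ, IsSolSys N p q u₀ v₀ T u' v' →
    ∀ t : ℝ, 0 < t → ENNReal.ofReal t < T →
      (∀ᵐ x ∂(volume : Measure (Euc N)), u x t ≤ u' x t) ∧
      (∀ᵐ x ∂(volume : Measure (Euc N)), v x t ≤ v' x t)

/-- Regularity requirements on a scalar function `w`. -/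
def ScalarRegular (N : ℕ) (T : ℝ≥0∞) (w : Euc N → ℝ → ℝ) : Prop :=
  (∀ x t, 0 ≤ w x t) ∧ Measurable (Function.uncurry w) ∧ LocBdd N T w

/-- The Duhamel identity for the scalar problem (E) `∂ₜw = Δw + α w^A + β w^B` at time `t`. -/
def DuhamelScalar (N : ℕ) (α β A B : ℝ) (w₀ : Euc N → ℝ) (w : Euc N → ℝ → ℝ) (t : ℝ) : Prop :=
  ∀ᵐ x ∂(volume : Measure (Euc N)), ENNReal.ofReal (w x t) =
    heatS N t w₀ x +
      ∫⁻ s in Set.Ioo 0 t, heatS N (t - s) (fun y => α * w y s ^ A + β * w y s ^ B) x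

/-- The Duhamel inequality (`≥`, with finite left-hand side) for the scalar problem (E). -/
def DuhamelSuperScalar (N : ℕ) (α β A B : ℝ) (w₀ : Euc N → ℝ) (w : Euc N → ℝ → ℝ)
    (t : ℝ) : Prop :=
  ∀ᵐ x ∂(volume : Measure (Euc N)),
    heatS N t w₀ x +
        (∫⁻ s in Set.Ioo 0 t, heatS N (t - s) (fun y => α * w y s ^ A + β * w y s ^ B) x) ≤
      ENNReal.ofReal (w x t)

/-- `w` is a solution of the scalar problem (E) on `ℝ^N × (0,T)`. -/
def IsSolScalar (N : ℕ) (α β A B : ℝ) (w₀ : Euc N → ℝ) (T : ℝ≥0∞)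
    (w : Euc N → ℝ → ℝ) : Prop :=
  ScalarRegular N T w ∧
  ∀ t : ℝ, 0 < t → ENNReal.ofReal t < T → DuhamelScalar N α β A B w₀ w t

/-- `w` is a supersolution of the scalar problem (E) on `ℝ^N × (0,T)`. -/
def IsSuperScalar (N : ℕ) (α β A B : ℝ) (w₀ : Euc N → ℝ) (T : ℝ≥0∞)
    (w : Euc N → ℝ → ℝ) : Prop :=
  ScalarRegular N T w ∧
  ∀ t : ℝ, 0 < t → ENNReal.ofReal t < T → DuhamelSuperScalar N α β A B w₀ w t

/-- The Duhamel identities for the strongly coupled system (SC)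
`∂ₜu = Δu + u^{p₁} v^{p₂}`, `∂ₜv = Δv + u^{q₁} v^{q₂}` at time `t`. -/
def DuhamelSC (N : ℕ) (p₁ p₂ q₁ q₂ : ℝ) (u₀ v₀ : Euc N → ℝ) (u v : Euc N → ℝ → ℝ)
    (t : ℝ) : Prop :=
  (∀ᵐ x ∂(volume : Measure (Euc N)), ENNReal.ofReal (u x t) =
      heatS N t u₀ x +
        ∫⁻ s in Set.Ioo 0 t, heatS N (t - s) (fun y => u y s ^ p₁ * v y s ^ p₂) x) ∧
  (∀ᵐ x ∂(volume : Measure (Euc N)), ENNReal.ofReal (v x t) =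
      heatS N t v₀ x +
        ∫⁻ s in Set.Ioo 0 t, heatS N (t - s) (fun y => u y s ^ q₁ * v y s ^ q₂) x)

/-- `(u,v)` is a solution of the strongly coupled system (SC) on `ℝ^N × (0,T)`. -/
def IsSolSC (N : ℕ) (p₁ p₂ q₁ q₂ : ℝ) (u₀ v₀ : Euc N → ℝ) (T : ℝ≥0∞)
    (u v : Euc N → ℝ → ℝ) : Prop :=
  PairRegular N T u v ∧
  ∀ t : ℝ, 0 < t → ENNReal.ofReal t < T → DuhamelSC N p₁ p₂ q₁ q₂ u₀ v₀ u v t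


/-! ### Heat kernel on `[0,∞]`-valued functions -/

lemma gauss_lint (N : ℕ) {b : ℝ} (hb : 0 < b) :
    ∫⁻ v : Euc N, ENNReal.ofReal (Real.exp (-b * ‖v‖ ^ 2)) =
      ENNReal.ofReal ((Real.pi / b) ^ ((N : ℝ) / 2)) := by
  have h := GaussianFourier.integral_rexp_neg_mul_sq_norm (V := Euc N) hb
  rw [finrank_euclideanSpace_fin] at h
  have hpos : 0 < (Real.pi / b) ^ ((N : ℝ) / 2) := by
    have := Real.pi_pos
    positivity
  have hint : Integrable (fun v : Euc N => Real.exp (-b * ‖v‖ ^ 2)) := by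
    by_contra hc
    rw [integral_undef hc] at h
    linarith
  rw [← h, ofReal_integral_eq_lintegral_ofReal hint]
  exact Filter.Eventually.of_forall fun v => (Real.exp_pos _).le

def gk (N : ℕ) (t : ℝ) (z : Euc N) : ℝ≥0∞ :=
  ENNReal.ofReal ((4 * Real.pi * t) ^ (-(N : ℝ) / 2) * Real.exp (-‖z‖ ^ 2 / (4 * t)))

def HH (N : ℕ) (t : ℝ) (φ : Euc N → ℝ≥0∞) (x : Euc N) : ℝ≥0∞ :=
  ∫⁻ y, gk N t (x - y) * φ y

lemma heatS_eq (N : ℕ) {t : ℝ} (ht : 0 < t) (φ : Euc N → ℝ) (x : Euc N) :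
    heatS N t φ x = HH N t (fun y => ENNReal.ofReal (φ y)) x := by
  unfold heatS HH gk
  refine lintegral_congr fun y => ?_
  rw [ENNReal.ofReal_mul]
  have := Real.pi_pos
  positivity

lemma gk_meas (N : ℕ) : Measurable (fun a : ℝ × Euc N => gk N a.1 a.2) := by
  unfold gk
  fun_prop

lemma gk_ne_zero {N : ℕ} {t : ℝ} (ht : 0 < t) (z : Euc N) : gk N t z ≠ 0 := by
  unfold gk
  have := Real.pi_pos
  rw [ENNReal.ofReal_ne_zero_iff]
  positivity

lemma gk_ne_top {N : ℕ} {t : ℝ} (z : Euc N) : gk N t z ≠ ⊤ := by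
  unfold gk
  exact ENNReal.ofReal_ne_top

lemma gk_lint (N : ℕ) {t : ℝ} (ht : 0 < t) : ∫⁻ z, gk N t z = 1 := by
  have hpi := Real.pi_pos
  unfold gk
  have h0 : 0 ≤ (4 * Real.pi * t) ^ (-(N : ℝ) / 2) := by positivity
  simp_rw [ENNReal.ofReal_mul h0]
  rw [lintegral_const_mul _ (by fun_prop)]
  have hb : 0 < 1 / (4 * t) := by positivity
  have := gauss_lint N hb
  have e : ∀ z : Euc N, -‖z‖ ^ 2 / (4 * t) = -(1 / (4 * t)) * ‖z‖ ^ 2 := by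
    intro z; field_simp
  simp_rw [e]
  rw [this, ← ENNReal.ofReal_mul h0]
  have : Real.pi / (1 / (4 * t)) = 4 * Real.pi * t := by field_simp
  rw [this, ← Real.rpow_add (by positivity)]
  have : -(N : ℝ) / 2 + N / 2 = 0 := by ring
  rw [this]; simp

lemma gk_lint_sub (N : ℕ) {t : ℝ} (ht : 0 < t) (x : Euc N) : ∫⁻ y, gk N t (x - y) = 1 := by
  rw [lintegral_sub_left_eq_self (fun y => gk N t y) x, gk_lint N ht]

lemma gk_sub_meas (N : ℕ) (t : ℝ) (x : Euc N) : Measurable (fun y => gk N t (x - y)) := by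
  have := gk_meas N
  exact this.comp (f := fun y : Euc N => (t, x - y)) (by fun_prop)

lemma HH_jensen {N : ℕ} {t : ℝ} (ht : 0 < t) {φ : Euc N → ℝ≥0∞} (hφ : Measurable φ)
    {b : ℝ} (hb0 : 0 ≤ b) (hb1 : b ≤ 1) (x : Euc N) :
    HH N t (fun y => φ y ^ b) x ≤ HH N t φ x ^ b := by
  have h := ENNReal.lintegral_mul_prod_norm_pow_le (μ := (volume : Measure (Euc N)))
    ({0} : Finset ℕ) (g := fun y => gk N t (x - y)) (f := fun _ y => gk N t (x - y) * φ y)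
    (gk_sub_meas N t x).aemeasurable
    (fun _ _ => ((gk_sub_meas N t x).mul hφ).aemeasurable) (1 - b) (p := fun _ => b)
    (by simp) (by linarith) (by intros; exact hb0)
  simp only [Finset.prod_singleton] at h
  rw [gk_lint_sub N ht x, ENNReal.one_rpow, one_mul] at h
  refine le_trans (le_of_eq ?_) h
  unfold HH
  refine lintegral_congr fun y => ?_
  rw [ENNReal.mul_rpow_of_nonneg _ _ hb0, ← mul_assoc,
    ← ENNReal.rpow_add _ _ (gk_ne_zero ht _) (gk_ne_top _)]
  simp

lemma HH_mono {N : ℕ} {t : ℝ} {φ ψ : Euc N → ℝ≥0∞} (h : ∀ y, φ y ≤ ψ y) (x : Euc N) :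
    HH N t φ x ≤ HH N t ψ x := by
  unfold HH
  gcongr with y
  exact h y

lemma HH_const_mul {N : ℕ} {t : ℝ} {φ : Euc N → ℝ≥0∞} (hφ : Measurable φ) (c : ℝ≥0∞)
    (x : Euc N) : HH N t (fun y => c * φ y) x = c * HH N t φ x := by
  unfold HH
  have hm : Measurable (fun y => gk N t (x - y) * φ y) := (gk_sub_meas N t x).mul hφ
  rw [← lintegral_const_mul _ hm]
  refine lintegral_congr fun y => ?_
  ring

lemma HH_add {N : ℕ} {t : ℝ} {φ ψ : Euc N → ℝ≥0∞} (hφ : Measurable φ)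
    (x : Euc N) : HH N t (fun y => φ y + ψ y) x = HH N t φ x + HH N t ψ x := by
  unfold HH
  have hm : Measurable (fun y => gk N t (x - y) * φ y) := (gk_sub_meas N t x).mul hφ
  rw [← lintegral_add_left hm]
  refine lintegral_congr fun y => ?_
  ring

lemma HH_const {N : ℕ} {t : ℝ} (ht : 0 < t) (c : ℝ≥0∞) (x : Euc N) :
    HH N t (fun _ => c) x = c := by
  unfold HH
  rw [lintegral_mul_const _ (gk_sub_meas N t x), gk_lint_sub N ht, one_mul]

lemma gk_even {N : ℕ} {t : ℝ} (z : Euc N) : gk N t (-z) = gk N t z := by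
  unfold gk; rw [norm_neg]

lemma gk_conv {N : ℕ} {t s : ℝ} (ht : 0 < t) (hs : 0 < s) (x y : Euc N) :
    ∫⁻ z, gk N t (x - z) * gk N s (z - y) = gk N (t + s) (x - y) := by
  have hpi := Real.pi_pos
  have hts : 0 < t + s := by positivity
  have hτ : 0 < t * s / (t + s) := by positivity
  set m : Euc N := (s / (t + s)) • x + (t / (t + s)) • y with hm
  have key : ∀ z, gk N t (x - z) * gk N s (z - y) =
      gk N (t + s) (x - y) * gk N (t * s / (t + s)) (z - m) := by
    intro z
    unfold gk
    rw [← ENNReal.ofReal_mul (by positivity), ← ENNReal.ofReal_mul (by positivity)]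
    congr 1
    have e1 : (4 * Real.pi * t) ^ (-(N : ℝ) / 2) * (4 * Real.pi * s) ^ (-(N : ℝ) / 2) =
        (4 * Real.pi * (t + s)) ^ (-(N : ℝ) / 2) *
          (4 * Real.pi * (t * s / (t + s))) ^ (-(N : ℝ) / 2) := by
      rw [← Real.mul_rpow (by positivity) (by positivity),
        ← Real.mul_rpow (by positivity) (by positivity)]
      congr 1
      field_simp
    have e2 : -‖x - z‖ ^ 2 / (4 * t) + -‖z - y‖ ^ 2 / (4 * s) =
        -‖x - y‖ ^ 2 / (4 * (t + s)) + -‖z - m‖ ^ 2 / (4 * (t * s / (t + s))) := by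
      have hz : z - m = (t / (t + s)) • (z - y) - (s / (t + s)) • (x - z) := by
        have h1 : z = (t / (t + s)) • z + (s / (t + s)) • z := by
          rw [← add_smul, ← add_div, div_self hts.ne', one_smul]
        rw [hm]
        nth_rewrite 1 [h1]
        module
      have hxy : x - y = (x - z) + (z - y) := by abel
      rw [hz, hxy, norm_sub_sq_real ((t / (t + s)) • (z - y)), norm_add_sq_real, norm_smul, norm_smul, inner_smul_left,
        inner_smul_right, real_inner_comm (x - z) (z - y)]
      simp only [Real.norm_eq_abs, mul_pow, sq_abs, RCLike.conj_to_real]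
      generalize ‖x - z‖ = a
      generalize ‖z - y‖ = b
      generalize inner ℝ (x - z) (z - y) = c
      field_simp
      ring
    calc _ = ((4 * Real.pi * t) ^ (-(N : ℝ) / 2) * (4 * Real.pi * s) ^ (-(N : ℝ) / 2)) *
          (Real.exp (-‖x - z‖ ^ 2 / (4 * t)) * Real.exp (-‖z - y‖ ^ 2 / (4 * s))) := by ring
      _ = _ := by
        rw [e1, ← Real.exp_add, e2, Real.exp_add]; ring
  simp_rw [key]
  rw [lintegral_const_mul, lintegral_sub_right_eq_self (fun z => gk N (t * s / (t + s)) z) m,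
    gk_lint N hτ, mul_one]
  exact (gk_meas N).comp (f := fun z : Euc N => (t * s / (t + s), z - m)) (by fun_prop)

lemma HH_semi {N : ℕ} {t s : ℝ} (ht : 0 < t) (hs : 0 < s) {φ : Euc N → ℝ≥0∞}
    (hφ : Measurable φ) (x : Euc N) :
    HH N t (HH N s φ) x = HH N (t + s) φ x := by
  have hm1 : Measurable (fun a : Euc N × Euc N => gk N s (a.1 - a.2)) :=
    (gk_meas N).comp (f := fun a : Euc N × Euc N => (s, a.1 - a.2)) (by fun_prop)
  unfold HH
  calc _ = ∫⁻ z, ∫⁻ y, gk N t (x - z) * (gk N s (z - y) * φ y) := by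
        refine lintegral_congr fun z => ?_
        rw [lintegral_const_mul]
        exact (gk_sub_meas N s z).mul hφ
    _ = ∫⁻ y, ∫⁻ z, gk N t (x - z) * (gk N s (z - y) * φ y) := by
        apply lintegral_lintegral_swap
        apply Measurable.aemeasurable
        have := gk_sub_meas N t x
        simp only [Function.uncurry_def]
        exact (this.comp measurable_fst).mul (hm1.mul (hφ.comp measurable_snd))
    _ = _ := by
        refine lintegral_congr fun y => ?_
        simp_rw [← mul_assoc]
        rw [lintegral_mul_const, gk_conv ht hs]
        exact (gk_sub_meas N t x).mul (hm1.comp (f := fun z : Euc N => (z, y)) (by fun_prop))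

lemma HH_meas {N : ℕ} {φ : Euc N → ℝ≥0∞} (hφ : Measurable φ) :
    Measurable (fun a : Euc N × ℝ => HH N a.2 φ a.1) := by
  unfold HH
  apply Measurable.lintegral_prod_right' (f := fun b : (Euc N × ℝ) × Euc N =>
    gk N b.1.2 (b.1.1 - b.2) * φ b.2)
  refine Measurable.mul ?_ (hφ.comp measurable_snd)
  exact (gk_meas N).comp (f := fun b : (Euc N × ℝ) × Euc N => (b.1.2, b.1.1 - b.2)) (by fun_prop)

lemma HH_meas_x {N : ℕ} {t : ℝ} {φ : Euc N → ℝ≥0∞} (hφ : Measurable φ) :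
    Measurable (HH N t φ) :=
  (HH_meas hφ).comp (f := fun x : Euc N => (x, t)) (by fun_prop)

lemma gk_le {N : ℕ} {t : ℝ} (ht : 0 < t) {x y z : Euc N} (h : ‖y - z‖ ^ 2 ≤ t) :
    gk N t (x - y) ≤ ENNReal.ofReal (Real.exp (1 / 4) * 2 ^ ((N : ℝ) / 2)) *
      gk N (2 * t) (x - z) := by
  have hpi := Real.pi_pos
  unfold gk
  rw [← ENNReal.ofReal_mul (by positivity)]
  apply ENNReal.ofReal_le_ofReal
  have e1 : (4 * Real.pi * t) ^ (-(N : ℝ) / 2) =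
      2 ^ ((N : ℝ) / 2) * (4 * Real.pi * (2 * t)) ^ (-(N : ℝ) / 2) := by
    have : 4 * Real.pi * (2 * t) = 2 * (4 * Real.pi * t) := by ring
    rw [this, Real.mul_rpow (x := 2) (y := 4 * Real.pi * t) (by positivity) (by positivity),
      ← mul_assoc,
      ← Real.rpow_add (by positivity)]
    have : (N : ℝ) / 2 + -N / 2 = 0 := by ring
    rw [this]; simp
  have e2 : -‖x - y‖ ^ 2 / (4 * t) ≤ 1 / 4 + -‖x - z‖ ^ 2 / (4 * (2 * t)) := by
    have h1 : ‖x - z‖ ≤ ‖x - y‖ + ‖y - z‖ := norm_sub_le_norm_sub_add_norm_sub x y z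
    have h2 : ‖x - z‖ ^ 2 ≤ 2 * ‖x - y‖ ^ 2 + 2 * t := by
      nlinarith [norm_nonneg (x - z), norm_nonneg (x - y), norm_nonneg (y - z),
        sq_nonneg (‖x - y‖ - ‖y - z‖)]
    rw [← sub_nonneg]
    have : 1 / 4 + -‖x - z‖ ^ 2 / (4 * (2 * t)) - -‖x - y‖ ^ 2 / (4 * t) =
      (2 * t - ‖x - z‖ ^ 2 + 2 * ‖x - y‖ ^ 2) / (8 * t) := by field_simp; ring
    rw [this]
    apply div_nonneg <;> linarith
  have e3 := Real.exp_le_exp.2 e2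
  rw [Real.exp_add] at e3
  rw [e1]
  have h0 : 0 ≤ (2 : ℝ) ^ ((N : ℝ) / 2) * (4 * Real.pi * (2 * t)) ^ (-(N : ℝ) / 2) := by
    positivity
  calc _ ≤ _ := mul_le_mul_of_nonneg_left e3 h0
    _ = _ := by ring

lemma HH_sup (N : ℕ) (hN : 1 ≤ N) : ∃ C0 : ℝ, 0 < C0 ∧ ∀ W : Euc N → ℝ≥0∞, Measurable W →
    ∀ (A : ℝ≥0∞) (t : ℝ), 0 < t → (∀ z, ∫⁻ y in Metric.ball z (√t), W y ≤ A) →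
    ∀ x, HH N t W x ≤ ENNReal.ofReal (C0 * t ^ (-(N : ℝ) / 2)) * A := by
  have : Nonempty (Fin N) := ⟨⟨0, hN⟩⟩
  set c : ℝ := Real.exp (1 / 4) * 2 ^ ((N : ℝ) / 2) with hc
  have hcpos : 0 < c := by positivity
  set β : ℝ≥0∞ := volume (Metric.ball (0 : Euc N) 1) with hβ
  have hβ0 : β ≠ 0 := (Metric.measure_ball_pos volume 0 one_pos).ne'
  have hβt : β ≠ ⊤ := measure_ball_lt_top.ne
  have hβr : 0 < β.toReal := ENNReal.toReal_pos hβ0 hβt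
  refine ⟨c / β.toReal, by positivity, ?_⟩
  intro W hW A t ht hA x
  have hst : 0 < √t := Real.sqrt_pos.2 ht
  have hvol : ∀ y : Euc N, volume (Metric.ball y (√t)) =
      ENNReal.ofReal (t ^ ((N : ℝ) / 2) * β.toReal) := by
    intro y
    rw [Measure.addHaar_ball _ _ hst.le, finrank_euclideanSpace_fin, ENNReal.ofReal_mul
      (by positivity), ENNReal.ofReal_toReal hβt]
    congr 2
    rw [Real.sqrt_eq_rpow, ← Real.rpow_natCast, ← Real.rpow_mul ht.le]
    congr 1; ring
  have hB : 0 < t ^ ((N : ℝ) / 2) * β.toReal := by positivity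
  have hkm : Measurable (fun y => gk N t (x - y) * W y) := (gk_sub_meas N t x).mul hW
  have hset : MeasurableSet {a : Euc N × Euc N | dist a.1 a.2 < √t} :=
    measurableSet_lt (by fun_prop) (by fun_prop)
  have key : ENNReal.ofReal (t ^ ((N : ℝ) / 2) * β.toReal) * HH N t W x ≤
      ENNReal.ofReal c * A := by
    calc _ = ∫⁻ y, ∫⁻ z, (Metric.ball y (√t)).indicator (fun _ => gk N t (x - y) * W y) z := by
          unfold HH
          rw [← lintegral_const_mul _ hkm]
          refine lintegral_congr fun y => ?_
          rw [lintegral_indicator_const measurableSet_ball, hvol, mul_comm]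
      _ = ∫⁻ z, ∫⁻ y, (Metric.ball y (√t)).indicator (fun _ => gk N t (x - y) * W y) z := by
          apply lintegral_lintegral_swap
          apply Measurable.aemeasurable
          have : (Function.uncurry fun y z : Euc N =>
              (Metric.ball y (√t)).indicator (fun _ => gk N t (x - y) * W y) z) =
              {a : Euc N × Euc N | dist a.2 a.1 < √t}.indicator
                (fun a => gk N t (x - a.1) * W a.1) := by
            ext a
            classical
            simp [Set.indicator_apply, Function.uncurry]
          rw [this]
          refine (hkm.comp measurable_fst).indicator ?_
          exact measurableSet_lt (by fun_prop) (by fun_prop)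
      _ ≤ ∫⁻ z, ENNReal.ofReal c * A * gk N (2 * t) (x - z) := by
          refine lintegral_mono fun z => ?_
          calc _ = ∫⁻ y in Metric.ball z (√t), gk N t (x - y) * W y := by
                rw [← lintegral_indicator measurableSet_ball]
                refine lintegral_congr fun y => ?_
                classical
                simp only [Set.indicator_apply, Metric.mem_ball]
                rw [dist_comm]
            _ ≤ ∫⁻ y in Metric.ball z (√t), ENNReal.ofReal c * gk N (2 * t) (x - z) * W y := by
                refine setLIntegral_mono' measurableSet_ball fun y hy => ?_
                gcongr
                apply gk_le ht
                rw [Metric.mem_ball, dist_eq_norm] at hy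
                calc _ ≤ (√t) ^ 2 := by gcongr
                  _ = t := Real.sq_sqrt ht.le
            _ = ENNReal.ofReal c * gk N (2 * t) (x - z) * ∫⁻ y in Metric.ball z (√t), W y :=
                lintegral_const_mul _ hW
            _ ≤ ENNReal.ofReal c * gk N (2 * t) (x - z) * A := by gcongr; exact hA z
            _ = _ := by ring
      _ = _ := by
          rw [lintegral_const_mul _ (gk_sub_meas N _ x), gk_lint_sub N (by positivity), mul_one]
  have hne : ENNReal.ofReal (t ^ ((N : ℝ) / 2) * β.toReal) ≠ 0 := by
    rw [ENNReal.ofReal_ne_zero_iff]; exact hB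
  rw [mul_comm] at key
  have k2 := (ENNReal.le_div_iff_mul_le (Or.inl hne) (Or.inl ENNReal.ofReal_ne_top)).2 key
  refine k2.trans (le_of_eq ?_)
  rw [div_eq_mul_inv, mul_right_comm, ← div_eq_mul_inv, ← ENNReal.ofReal_div_of_pos hB]
  congr 2
  rw [neg_div, Real.rpow_neg ht.le]
  field_simp

lemma time_int {t a : ℝ} (ht : 0 < t) (ha : a < 1) :
    ∫⁻ s in Set.Ioo 0 t, ENNReal.ofReal (s ^ (-a)) = ENNReal.ofReal (t ^ (1 - a) / (1 - a)) := by
  have h1 : -1 < -a := by linarith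
  have hi := (intervalIntegral.intervalIntegrable_rpow' (a := 0) (b := t) h1)
  rw [intervalIntegrable_iff_integrableOn_Ioo_of_le ht.le] at hi
  rw [← ofReal_integral_eq_lintegral_ofReal hi]
  · have := integral_rpow (a := 0) (b := t) (Or.inl h1)
    rw [intervalIntegral.integral_of_le ht.le, integral_Ioc_eq_integral_Ioo] at this
    rw [this, Real.zero_rpow (by linarith), show -a + 1 = 1 - a by ring, sub_zero]
  · refine (ae_restrict_iff' measurableSet_Ioo).2 (Filter.Eventually.of_forall fun s hs => ?_)
    exact Real.rpow_nonneg hs.1.le _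

/-! ### The Duhamel operator and the supersolution estimate -/

def Duh (N : ℕ) (p : ℝ) (U0 : Euc N → ℝ≥0∞) (V : Euc N → ℝ → ℝ≥0∞) (x : Euc N) (t : ℝ) : ℝ≥0∞ :=
  HH N t U0 x + ∫⁻ s in Set.Ioo 0 t, HH N (t - s) (fun y => V y s ^ p) x

lemma HH_meas3 {N : ℕ} {V : Euc N → ℝ → ℝ≥0∞} (hV : Measurable (Function.uncurry V)) (p : ℝ) :
    Measurable (fun a : (Euc N × ℝ) × ℝ => HH N (a.1.2 - a.2) (fun y => V y a.2 ^ p) a.1.1) := by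
  unfold HH
  apply Measurable.lintegral_prod_right' (f := fun b : ((Euc N × ℝ) × ℝ) × Euc N =>
    gk N (b.1.1.2 - b.1.2) (b.1.1.1 - b.2) * V b.2 b.1.2 ^ p)
  refine Measurable.mul ?_ (Measurable.pow_const ?_ _)
  · exact (gk_meas N).comp (f := fun b : ((Euc N × ℝ) × ℝ) × Euc N =>
      (b.1.1.2 - b.1.2, b.1.1.1 - b.2)) (by fun_prop)
  · exact hV.comp (f := fun b : ((Euc N × ℝ) × ℝ) × Euc N => (b.2, b.1.2)) (by fun_prop)

lemma HH_meas_s {N : ℕ} {V : Euc N → ℝ → ℝ≥0∞} (hV : Measurable (Function.uncurry V)) (p : ℝ)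
    (x : Euc N) (t : ℝ) :
    Measurable (fun s : ℝ => HH N (t - s) (fun y => V y s ^ p) x) :=
  (HH_meas3 hV p).comp (f := fun s : ℝ => ((x, t), s)) (by fun_prop)

lemma sec_meas {N : ℕ} {V : Euc N → ℝ → ℝ≥0∞} (hV : Measurable (Function.uncurry V)) (s : ℝ) :
    Measurable (fun y => V y s) :=
  hV.comp (f := fun y : Euc N => (y, s)) (by fun_prop)

lemma Duh_meas {N : ℕ} {p : ℝ} {U0 : Euc N → ℝ≥0∞} (hU0 : Measurable U0)
    {V : Euc N → ℝ → ℝ≥0∞} (hV : Measurable (Function.uncurry V)) :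
    Measurable (Function.uncurry (Duh N p U0 V)) := by
  have : Function.uncurry (Duh N p U0 V) = fun a : Euc N × ℝ => HH N a.2 U0 a.1 +
      ∫⁻ s, {b : (Euc N × ℝ) × ℝ | 0 < b.2 ∧ b.2 < b.1.2}.indicator
        (fun b => HH N (b.1.2 - b.2) (fun y => V y b.2 ^ p) b.1.1) (a, s) := by
    ext a
    simp only [Function.uncurry, Duh]
    congr 1
    rw [← lintegral_indicator measurableSet_Ioo]
    refine lintegral_congr fun s => ?_
    classical
    simp [Set.indicator_apply]
  rw [this]
  refine (HH_meas hU0).add ?_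
  apply Measurable.lintegral_prod_right'
  refine (HH_meas3 hV p).indicator ?_
  have m1 : MeasurableSet {b : (Euc N × ℝ) × ℝ | 0 < b.2} :=
    measurableSet_lt (by fun_prop) (by fun_prop)
  have m2 : MeasurableSet {b : (Euc N × ℝ) × ℝ | b.2 < b.1.2} :=
    measurableSet_lt (by fun_prop) (by fun_prop)
  exact m1.inter m2

lemma Duh_mono {N : ℕ} {p : ℝ} (hp : 0 ≤ p) {U0 : Euc N → ℝ≥0∞} {V V' : Euc N → ℝ → ℝ≥0∞}
    (h : ∀ y s, V y s ≤ V' y s) (x : Euc N) (t : ℝ) : Duh N p U0 V x t ≤ Duh N p U0 V' x t := by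
  unfold Duh
  gcongr with s
  refine HH_mono (fun y => ?_) x
  exact ENNReal.rpow_le_rpow (h y s) hp

lemma iSup_rpow' {p : ℝ} (hp : 0 ≤ p) (g : ℕ → ℝ≥0∞) : (⨆ n, g n) ^ p = ⨆ n, g n ^ p := by
  rcases hp.eq_or_lt with h | h
  · subst h; simp
  · exact (ENNReal.orderIsoRpow p h).map_iSup g

lemma Duh_iSup {N : ℕ} {p : ℝ} (hp : 0 ≤ p) {U0 : Euc N → ℝ≥0∞} {V : ℕ → Euc N → ℝ → ℝ≥0∞}
    (hV : ∀ n, Measurable (Function.uncurry (V n))) (hmono : ∀ y s, Monotone (fun n => V n y s))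
    (x : Euc N) (t : ℝ) :
    Duh N p U0 (fun y s => ⨆ n, V n y s) x t = ⨆ n, Duh N p U0 (V n) x t := by
  unfold Duh
  rw [← ENNReal.add_iSup]
  congr 1
  rw [← lintegral_iSup (fun n => HH_meas_s (hV n) p x t)]
  · refine lintegral_congr fun s => ?_
    unfold HH
    rw [← lintegral_iSup]
    · refine lintegral_congr fun y => ?_
      dsimp only
      rw [iSup_rpow' hp, ENNReal.mul_iSup]
    · intro n
      exact (gk_sub_meas N _ x).mul ((sec_meas (hV n) s).pow_const p)
    · intro m n hmn y
      dsimp only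
      gcongr
      exact hmono y s hmn
  · intro m n hmn s
    refine HH_mono (fun y => ?_) x
    exact ENNReal.rpow_le_rpow (hmono y s hmn) hp

lemma pow_aux {α p b : ℝ} (hα : 0 ≤ α) (hp : 0 ≤ p) (h : α * p ≤ b) (X : ℝ≥0∞) :
    (2 * X ^ α + 1) ^ p ≤ ENNReal.ofReal (3 ^ p) * (1 + X ^ b) := by
  have h3 : ENNReal.ofReal (3 ^ p) = 3 ^ p := by
    rw [← ENNReal.ofReal_rpow_of_nonneg (by norm_num) hp]; simp
  rw [h3]
  rcases le_total X 1 with hX | hX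
  · have h1 : X ^ α ≤ 1 := ENNReal.rpow_le_one hX hα
    calc (2 * X ^ α + 1) ^ p ≤ (2 * 1 + 1) ^ p := by gcongr
      _ = 3 ^ p * 1 := by norm_num
      _ ≤ _ := by gcongr; exact le_self_add
  · have h1 : 1 ≤ X ^ α := by
      simpa using ENNReal.rpow_le_rpow hX hα
    calc (2 * X ^ α + 1) ^ p ≤ (2 * X ^ α + X ^ α) ^ p := by gcongr
      _ = (3 * X ^ α) ^ p := by congr 1; ring
      _ = 3 ^ p * X ^ (α * p) := by rw [ENNReal.mul_rpow_of_nonneg _ _ hp, ENNReal.rpow_mul]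
      _ ≤ 3 ^ p * X ^ b := by gcongr
      _ ≤ _ := by gcongr; exact le_add_self

/-- Main integral estimate. -/
lemma int_est {N : ℕ} {θ ρ1 k : ℝ} (hθ : 0 < θ) (hθ1 : θ < ρ1) (hk : 0 < k) :
    ∃ c : ℝ, 0 < c ∧ ∀ f : Euc N → ℝ≥0∞, Measurable f → ∀ D T : ℝ, 0 < D →
      (∀ t, 0 < t → t ≤ T → ∀ x, HH N t f x ^ θ ≤ ENNReal.ofReal (D * t ^ (-(1 / k)))) →
      ∀ t, 0 < t → t ≤ T → ∀ x,
        ∫⁻ s in Set.Ioo 0 t, HH N (t - s) (fun y => HH N s f y ^ (θ * (1 / ρ1 + k))) x ≤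
          ENNReal.ofReal (c * D ^ k) * HH N t f x ^ (θ / ρ1) := by
  have hρ : 0 < ρ1 := hθ.trans hθ1
  set b := θ * (1 / ρ1 + k) with hb
  set b1 := min b 1 with hb1
  set e1 := b1 / θ - 1 / ρ1 with he1
  set e2 := (b - b1) / θ with he2
  have hbθ : b / θ = 1 / ρ1 + k := by rw [hb]; field_simp
  have he : e1 + e2 = k := by
    rw [he1, he2, sub_div, hbθ]; ring
  have hbpos : 0 < b := by positivity
  have hb10 : 0 ≤ b1 := le_min hbpos.le zero_le_one
  have he1pos : 0 < e1 := by
    rw [he1, sub_pos, lt_div_iff₀ hθ, hb1, lt_min_iff]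
    constructor
    · rw [hb, mul_comm]; gcongr; linarith
    · rw [one_div_mul_eq_div, div_lt_one hρ]; exact hθ1
  have he20 : 0 ≤ e2 := div_nonneg (sub_nonneg.2 (min_le_left _ _)) hθ.le
  have hm2 : 1 / k * e2 < 1 := by
    rw [one_div_mul_eq_div, div_lt_one hk]; linarith
  set a := 1 / k * e2 with ha
  have hae : 1 / k * e1 = 1 - a := by
    rw [ha, ← he]; rw [← he] at hk; field_simp; ring
  refine ⟨1 / (1 - a), by apply one_div_pos.2; linarith, ?_⟩
  intro f hf D T hD hF t ht htT x
  -- powers of F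
  have hFe : ∀ s, 0 < s → s ≤ T → ∀ y, ∀ e, 0 ≤ e → HH N s f y ^ (θ * e) ≤
      ENNReal.ofReal (D ^ e * s ^ (-(1 / k * e))) := by
    intro s hs hsT y e he
    rw [ENNReal.rpow_mul]
    refine (ENNReal.rpow_le_rpow (hF s hs hsT y) he).trans (le_of_eq ?_)
    rw [ENNReal.ofReal_rpow_of_nonneg (by positivity) he,
      Real.mul_rpow hD.le (by positivity), ← Real.rpow_mul hs.le, neg_mul]
  have hpt : ∀ s ∈ Set.Ioo 0 t, HH N (t - s) (fun y => HH N s f y ^ b) x ≤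
      ENNReal.ofReal (s ^ (-a)) * (ENNReal.ofReal (D ^ e2) * HH N t f x ^ b1) := by
    intro s hs
    have hFm : Measurable (HH N s f) := HH_meas_x hf
    calc _ ≤ HH N (t - s) (fun y => ENNReal.ofReal (D ^ e2 * s ^ (-a)) * HH N s f y ^ b1) x := by
          refine HH_mono (fun y => ?_) x
          have : b = θ * e2 + b1 := by rw [he2]; field_simp; ring
          rw [this, ENNReal.rpow_add_of_nonneg _ _ (by positivity) hb10]
          gcongr
          exact hFe s hs.1 (hs.2.le.trans htT) y e2 he20
      _ = ENNReal.ofReal (D ^ e2 * s ^ (-a)) * HH N (t - s) (fun y => HH N s f y ^ b1) x :=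
          HH_const_mul (hFm.pow_const _) _ _
      _ ≤ ENNReal.ofReal (D ^ e2 * s ^ (-a)) * HH N t f x ^ b1 := by
          gcongr
          refine (HH_jensen (sub_pos.2 hs.2) hFm hb10 (min_le_right _ _) x).trans (le_of_eq ?_)
          rw [HH_semi (sub_pos.2 hs.2) hs.1 hf, sub_add_cancel]
      _ = _ := by
          rw [ENNReal.ofReal_mul (by positivity)]; ring
  have hFt : HH N t f x ^ b1 ≤
      ENNReal.ofReal (D ^ e1 * t ^ (-(1 - a))) * HH N t f x ^ (θ / ρ1) := by
    have : b1 = θ * e1 + θ / ρ1 := by rw [he1]; field_simp; ring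
    rw [this, ENNReal.rpow_add_of_nonneg _ _ (by positivity) (by positivity)]
    gcongr
    rw [← hae]
    exact hFe t ht htT x e1 he1pos.le
  calc _ ≤ ∫⁻ s in Set.Ioo 0 t, ENNReal.ofReal (s ^ (-a)) *
          (ENNReal.ofReal (D ^ e2) * HH N t f x ^ b1) :=
        setLIntegral_mono' measurableSet_Ioo hpt
    _ = ENNReal.ofReal (t ^ (1 - a) / (1 - a)) *
          (ENNReal.ofReal (D ^ e2) * HH N t f x ^ b1) := by
        rw [lintegral_mul_const _ (by fun_prop), time_int ht hm2]
    _ ≤ ENNReal.ofReal (t ^ (1 - a) / (1 - a)) * (ENNReal.ofReal (D ^ e2) *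
          (ENNReal.ofReal (D ^ e1 * t ^ (-(1 - a))) * HH N t f x ^ (θ / ρ1))) := by gcongr
    _ = _ := by
        have h1a : 0 < 1 - a := by linarith
        rw [← mul_assoc, ← mul_assoc, ← ENNReal.ofReal_mul (by positivity),
          ← ENNReal.ofReal_mul (by positivity)]
        congr 2
        rw [← he, Real.rpow_add hD, Real.rpow_neg ht.le]
        field_simp

lemma Duh_bound {N : ℕ} {θ ρ1 ρ2 k p : ℝ} (hθ : 0 < θ) (hθ1 : θ < ρ1) (hρ2 : 0 < ρ2)
    (hk : 0 < k) (hp : 0 ≤ p) (hpk : p / ρ2 ≤ 1 / ρ1 + k) :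
    ∃ δ T1 : ℝ, 0 < δ ∧ 0 < T1 ∧ ∀ f : Euc N → ℝ≥0∞, Measurable f → ∀ D T : ℝ, 0 < D → D ≤ δ →
      T ≤ T1 →
      (∀ t, 0 < t → t ≤ T → ∀ x, HH N t f x ^ θ ≤ ENNReal.ofReal (D * t ^ (-(1 / k)))) →
      ∀ U0 : Euc N → ℝ≥0∞, (∀ y, U0 y ≤ f y ^ (θ / ρ1)) →
      ∀ V : Euc N → ℝ → ℝ≥0∞,
      (∀ s, 0 < s → s ≤ T → ∀ y, V y s ≤ 2 * HH N s f y ^ (θ / ρ2) + 1) →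
      ∀ t, 0 < t → t ≤ T → ∀ x, Duh N p U0 V x t ≤ 2 * HH N t f x ^ (θ / ρ1) + 1 := by
  have hρ : 0 < ρ1 := hθ.trans hθ1
  obtain ⟨c, hc, H⟩ := int_est (N := N) hθ hθ1 hk
  refine ⟨(1 / (3 ^ p * c)) ^ (1 / k), 1 / 3 ^ p, by positivity, by positivity, ?_⟩
  intro f hf D T hD hDδ hT hF U0 hU0 V hV t ht htT x
  have h1 : HH N t U0 x ≤ HH N t f x ^ (θ / ρ1) :=
    (HH_mono hU0 x).trans (HH_jensen ht hf (by positivity) ((div_le_one hρ).2 hθ1.le) x)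
  have hDk : 3 ^ p * (c * D ^ k) ≤ 1 := by
    have : D ^ k ≤ 1 / (3 ^ p * c) := by
      calc D ^ k ≤ ((1 / (3 ^ p * c)) ^ (1 / k)) ^ k := by gcongr
        _ = _ := by
          rw [← Real.rpow_mul (by positivity), one_div_mul_cancel hk.ne', Real.rpow_one]
    rw [le_div_iff₀ (by positivity)] at this
    linarith
  have hTt : 3 ^ p * t ≤ 1 := by
    have : t ≤ 1 / 3 ^ p := htT.trans hT
    rw [le_div_iff₀ (by positivity)] at this
    linarith
  have hmeas : Measurable (Function.uncurry (fun (y : Euc N) s => HH N s f y)) := HH_meas hf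
  have h2 : ∫⁻ s in Set.Ioo 0 t, HH N (t - s) (fun y => V y s ^ p) x ≤
      1 + HH N t f x ^ (θ / ρ1) := by
    calc _ ≤ ∫⁻ s in Set.Ioo 0 t, ENNReal.ofReal (3 ^ p) *
          (1 + HH N (t - s) (fun y => HH N s f y ^ (θ * (1 / ρ1 + k))) x) := by
          refine setLIntegral_mono' measurableSet_Ioo fun s hs => ?_
          have hts := sub_pos.2 hs.2
          calc _ ≤ HH N (t - s) (fun y => ENNReal.ofReal (3 ^ p) *
                (1 + HH N s f y ^ (θ * (1 / ρ1 + k)))) x := by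
                refine HH_mono (fun y => ?_) x
                refine (ENNReal.rpow_le_rpow (hV s hs.1 (hs.2.le.trans htT) y) hp).trans ?_
                apply pow_aux (by positivity) hp
                calc θ / ρ2 * p = θ * (p / ρ2) := by ring
                  _ ≤ _ := by gcongr
            _ = _ := by
                have hm : Measurable (fun y => HH N s f y ^ (θ * (1 / ρ1 + k))) :=
                  (HH_meas_x hf).pow_const _
                rw [HH_const_mul (by fun_prop), HH_add (by fun_prop), HH_const hts]
      _ = ENNReal.ofReal (3 ^ p) * (ENNReal.ofReal t +
          ∫⁻ s in Set.Ioo 0 t, HH N (t - s) (fun y => HH N s f y ^ (θ * (1 / ρ1 + k))) x) := by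
          have hm := HH_meas_s hmeas (θ * (1 / ρ1 + k)) x t
          rw [lintegral_const_mul _ (by fun_prop), lintegral_add_left (by fun_prop)]
          simp
      _ ≤ ENNReal.ofReal (3 ^ p) * (ENNReal.ofReal t +
          ENNReal.ofReal (c * D ^ k) * HH N t f x ^ (θ / ρ1)) := by
          gcongr
          exact H f hf D T hD hF t ht htT x
      _ = ENNReal.ofReal (3 ^ p * t) +
          ENNReal.ofReal (3 ^ p * (c * D ^ k)) * HH N t f x ^ (θ / ρ1) := by
          rw [ENNReal.ofReal_mul (p := 3 ^ p) (q := t) (by positivity),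
            ENNReal.ofReal_mul (p := 3 ^ p) (q := c * D ^ k) (by positivity)]
          ring
      _ ≤ 1 + 1 * HH N t f x ^ (θ / ρ1) := by
          gcongr
          · exact ENNReal.ofReal_le_one.2 hTt
          · exact ENNReal.ofReal_le_one.2 hDk
      _ = _ := by rw [one_mul]
  unfold Duh
  calc _ ≤ HH N t f x ^ (θ / ρ1) + (1 + HH N t f x ^ (θ / ρ1)) := add_le_add h1 h2
    _ = _ := by ring

/-! ### Monotone iteration -/

def itp (N : ℕ) (p q : ℝ) (U0 V0 : Euc N → ℝ≥0∞) :
    ℕ → (Euc N → ℝ → ℝ≥0∞) × (Euc N → ℝ → ℝ≥0∞)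
  | 0 => (fun _ _ => 0, fun _ _ => 0)
  | n + 1 => (Duh N p U0 (itp N p q U0 V0 n).2, Duh N q V0 (itp N p q U0 V0 n).1)

lemma itp_meas {N : ℕ} {p q : ℝ} {U0 V0 : Euc N → ℝ≥0∞} (hU0 : Measurable U0)
    (hV0 : Measurable V0) (n : ℕ) : Measurable (Function.uncurry (itp N p q U0 V0 n).1) ∧
      Measurable (Function.uncurry (itp N p q U0 V0 n).2) := by
  induction n with
  | zero => exact ⟨measurable_const, measurable_const⟩
  | succ n ih => exact ⟨Duh_meas hU0 ih.2, Duh_meas hV0 ih.1⟩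

lemma itp_le_succ {N : ℕ} {p q : ℝ} (hp : 0 ≤ p) (hq : 0 ≤ q) {U0 V0 : Euc N → ℝ≥0∞} (n : ℕ) :
    (∀ x t, (itp N p q U0 V0 n).1 x t ≤ (itp N p q U0 V0 (n + 1)).1 x t) ∧
    (∀ x t, (itp N p q U0 V0 n).2 x t ≤ (itp N p q U0 V0 (n + 1)).2 x t) := by
  induction n with
  | zero => exact ⟨fun _ _ => bot_le, fun _ _ => bot_le⟩
  | succ n ih => exact ⟨fun x t => Duh_mono hp ih.2 x t, fun x t => Duh_mono hq ih.1 x t⟩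

/-- Solution of the `[0,∞]`-valued system dominated by any invariant bound. -/
lemma exists_fix {N : ℕ} {p q : ℝ} (hp : 0 ≤ p) (hq : 0 ≤ q) {U0 V0 : Euc N → ℝ≥0∞}
    (hU0 : Measurable U0) (hV0 : Measurable V0) (T : ℝ) (A B : Euc N → ℝ → ℝ≥0∞)
    (hA : ∀ V : Euc N → ℝ → ℝ≥0∞, (∀ s, 0 < s → s ≤ T → ∀ y, V y s ≤ B y s) →
      ∀ t, 0 < t → t ≤ T → ∀ x, Duh N p U0 V x t ≤ A x t)
    (hB : ∀ U : Euc N → ℝ → ℝ≥0∞, (∀ s, 0 < s → s ≤ T → ∀ y, U y s ≤ A y s) →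
      ∀ t, 0 < t → t ≤ T → ∀ x, Duh N q V0 U x t ≤ B x t) :
    ∃ U V : Euc N → ℝ → ℝ≥0∞, Measurable (Function.uncurry U) ∧ Measurable (Function.uncurry V) ∧
      (∀ x t, U x t = Duh N p U0 V x t) ∧ (∀ x t, V x t = Duh N q V0 U x t) ∧
      (∀ t, 0 < t → t ≤ T → ∀ x, U x t ≤ A x t) ∧
      (∀ t, 0 < t → t ≤ T → ∀ x, V x t ≤ B x t) := by
  have hm := itp_meas (p := p) (q := q) hU0 hV0
  have hl := itp_le_succ (p := p) (q := q) hp hq (U0 := U0) (V0 := V0)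
  have hmono1 : ∀ x t, Monotone (fun n => (itp N p q U0 V0 n).1 x t) := fun x t =>
    monotone_nat_of_le_succ fun n => (hl n).1 x t
  have hmono2 : ∀ x t, Monotone (fun n => (itp N p q U0 V0 n).2 x t) := fun x t =>
    monotone_nat_of_le_succ fun n => (hl n).2 x t
  have hbd : ∀ n, (∀ t, 0 < t → t ≤ T → ∀ x, (itp N p q U0 V0 n).1 x t ≤ A x t) ∧
      (∀ t, 0 < t → t ≤ T → ∀ x, (itp N p q U0 V0 n).2 x t ≤ B x t) := by
    intro n
    induction n with
    | zero => exact ⟨fun _ _ _ _ => bot_le, fun _ _ _ _ => bot_le⟩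
    | succ n ih => exact ⟨hA _ ih.2, hB _ ih.1⟩
  refine ⟨fun x t => ⨆ n, (itp N p q U0 V0 n).1 x t, fun x t => ⨆ n, (itp N p q U0 V0 n).2 x t,
    ?_, ?_, ?_, ?_, ?_, ?_⟩
  · exact Measurable.iSup fun n => (hm n).1
  · exact Measurable.iSup fun n => (hm n).2
  · intro x t
    rw [Duh_iSup hp (fun n => (hm n).2) hmono2]
    exact ((hmono1 x t).iSup_nat_add 1).symm
  · intro x t
    rw [Duh_iSup hq (fun n => (hm n).1) hmono1]
    exact ((hmono2 x t).iSup_nat_add 1).symm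
  · intro t ht htT x
    exact iSup_le fun n => (hbd n).1 t ht htT x
  · intro t ht htT x
    exact iSup_le fun n => (hbd n).2 t ht htT x

lemma Duh_real {N : ℕ} {p : ℝ} (hp : 0 ≤ p) {u₀ : Euc N → ℝ} {U V : Euc N → ℝ → ℝ≥0∞} {T : ℝ}
    (hU : ∀ x t, U x t = Duh N p (fun y => ENNReal.ofReal (u₀ y)) V x t)
    (hUf : ∀ t, 0 < t → t ≤ T → ∀ x, U x t ≠ ⊤) (hVf : ∀ t, 0 < t → t ≤ T → ∀ x, V x t ≠ ⊤)
    {t : ℝ} (ht : 0 < t) (htT : t ≤ T) (x : Euc N) :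
    ENNReal.ofReal (U x t).toReal = heatS N t u₀ x +
      ∫⁻ s in Set.Ioo 0 t, heatS N (t - s) (fun y => (V y s).toReal ^ p) x := by
  rw [ENNReal.ofReal_toReal (hUf t ht htT x), hU, heatS_eq N ht]
  unfold Duh
  congr 1
  refine setLIntegral_congr_fun measurableSet_Ioo fun s hs => ?_
  rw [heatS_eq N (sub_pos.2 hs.2)]
  congr 1
  ext y
  rw [← ENNReal.ofReal_rpow_of_nonneg ENNReal.toReal_nonneg hp,
    ENNReal.ofReal_toReal (hVf s hs.1 (hs.2.le.trans htT) y)]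

/-- Theorem 3.1 (ii), first part: if `0 < max{P,Q} ≤ 2` and
`1 < r ≤ min{r₁,r₂}`, there is `σ* > 1` such that for every `σ ∈ (1,σ*]` there are
`γ₁, T₁, C > 0` such that `|||W₀|||_{1,ρ} ≤ γ₁ ρ^{N(1-2/max{P,Q})}` for some `ρ > 0` implies
the existence of a solution of (S) on `ℝ^N × (0, min{ρ²,T₁}]` with
`0 ≤ u^{r₁} + v^{r₂} ≤ C [S(t)W₀^{σ/r}]^{r/σ} + C`. -/
theorem statement8 (N : ℕ) (hN : 1 ≤ N) (p q r₁ r₂ : ℝ) (hp : 0 ≤ p) (hq : 0 ≤ q)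
    (hr₁ : 1 ≤ r₁) (hr₂ : 1 ≤ r₂) (P Q : ℝ)
    (hP : P = (N : ℝ) * (p / r₂ - 1 / r₁)) (hQ : Q = (N : ℝ) * (q / r₁ - 1 / r₂))
    (hPQpos : 0 < max P Q) (hPQ2 : max P Q ≤ 2)
    (r : ℝ) (hr : 1 < r) (hrm : r ≤ min r₁ r₂) :
    ∃ σstar : ℝ, 1 < σstar ∧
      ∀ σ : ℝ, 1 < σ → σ ≤ σstar →
        ∃ γ₁ T₁ C : ℝ, 0 < γ₁ ∧ 0 < T₁ ∧ 0 < C ∧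
          ∀ u₀ v₀ : Euc N → ℝ, Measurable u₀ → Measurable v₀ →
            (∀ x, 0 ≤ u₀ x) → (∀ x, 0 ≤ v₀ x) →
            ulocNorm N (ENNReal.ofReal r₁) 1 u₀ < ⊤ →
            ulocNorm N (ENNReal.ofReal r₂) 1 v₀ < ⊤ →
            ∀ ρ : ℝ, 0 < ρ →
              ulocNorm N 1 ρ (fun x => u₀ x ^ r₁ + v₀ x ^ r₂) ≤
                ENNReal.ofReal (γ₁ * ρ ^ ((N : ℝ) * (1 - 2 / max P Q))) →
              ∃ u v : Euc N → ℝ → ℝ,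
                (∀ x t, 0 ≤ u x t) ∧ (∀ x t, 0 ≤ v x t) ∧
                Measurable (Function.uncurry u) ∧ Measurable (Function.uncurry v) ∧
                ∀ t : ℝ, 0 < t → t ≤ min (ρ ^ 2) T₁ →
                  DuhamelSys N p q u₀ v₀ u v t ∧
                  ∀ᵐ x ∂(volume : Measure (Euc N)),
                    ENNReal.ofReal (u x t ^ r₁ + v x t ^ r₂) ≤
                      ENNReal.ofReal C *
                        heatS N t (fun y => (u₀ y ^ r₁ + v₀ y ^ r₂) ^ (σ / r)) x ^ (r / σ) +
                      ENNReal.ofReal C := by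
  have hrr₁ : r ≤ r₁ := hrm.trans (min_le_left _ _)
  have hrr₂ : r ≤ r₂ := hrm.trans (min_le_right _ _)
  have hr₁0 : 0 < r₁ := by linarith
  have hr₂0 : 0 < r₂ := by linarith
  have hN0 : (0 : ℝ) < N := by exact_mod_cast hN
  refine ⟨r, hr, fun σ hσ1 hσr => ?_⟩
  have hσ0 : 0 < σ := by linarith
  set κ := max P Q with hκ
  set θ := r / σ with hθdef
  have hθ1 : 1 ≤ θ := (one_le_div hσ0).2 hσr
  have hθ0 : 0 < θ := by linarith
  have hθr : θ < r := div_lt_self (by linarith) hσ1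
  have hk : 0 < κ / N := by positivity
  have hpk : p / r₂ ≤ 1 / r₁ + κ / N := by
    have : P ≤ κ := le_max_left _ _
    rw [hP] at this
    have : p / r₂ - 1 / r₁ ≤ κ / N := by rw [le_div_iff₀ hN0]; linarith
    linarith
  have hqk : q / r₁ ≤ 1 / r₂ + κ / N := by
    have : Q ≤ κ := le_max_right _ _
    rw [hQ] at this
    have : q / r₁ - 1 / r₂ ≤ κ / N := by rw [le_div_iff₀ hN0]; linarith
    linarith
  obtain ⟨δ₁, S₁, hδ₁, hS₁, H₁⟩ :=
    Duh_bound (N := N) hθ0 (hθr.trans_le hrr₁) hr₂0 hk hp hpk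
  obtain ⟨δ₂, S₂, hδ₂, hS₂, H₂⟩ :=
    Duh_bound (N := N) hθ0 (hθr.trans_le hrr₂) hr₁0 hk hq hqk
  obtain ⟨C0, hC0, HS⟩ := HH_sup N hN
  set D := min δ₁ δ₂ with hD
  have hDpos : 0 < D := lt_min hδ₁ hδ₂
  refine ⟨D / C0, min S₁ S₂, 3 ^ r₁ + 3 ^ r₂, by positivity, lt_min hS₁ hS₂, by positivity, ?_⟩
  intro u₀ v₀ hu₀ hv₀ hu₀n hv₀n _ _ ρ hρ hW
  set W : Euc N → ℝ := fun x => u₀ x ^ r₁ + v₀ x ^ r₂ with hWdef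
  have hWn : ∀ x, 0 ≤ W x := fun x =>
    add_nonneg (Real.rpow_nonneg (hu₀n x) _) (Real.rpow_nonneg (hv₀n x) _)
  have hWm : Measurable (fun x => ENNReal.ofReal (W x)) := by
    rw [hWdef]; fun_prop
  set f : Euc N → ℝ≥0∞ := fun x => ENNReal.ofReal (W x) ^ (1 / θ) with hf
  have hfm : Measurable f := hWm.pow_const _
  set T := min (ρ ^ 2) (min S₁ S₂) with hT
  have hF : ∀ t, 0 < t → t ≤ T → ∀ x,
      HH N t f x ^ θ ≤ ENNReal.ofReal (D * t ^ (-(1 / (κ / N)))) := by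
    intro t ht htT x
    have htρ : √t ≤ ρ := by
      rw [Real.sqrt_le_left hρ.le]; exact htT.trans (min_le_left _ _)
    have h1 : HH N t f x ^ θ ≤ HH N t (fun y => ENNReal.ofReal (W y)) x := by
      have := ENNReal.rpow_le_rpow (HH_jensen ht hWm (b := 1 / θ) (by positivity)
        ((div_le_one hθ0).2 hθ1) x) hθ0.le
      rwa [← ENNReal.rpow_mul, one_div_mul_cancel hθ0.ne', ENNReal.rpow_one] at this
    refine h1.trans ((HS _ hWm (ENNReal.ofReal (D / C0 * ρ ^ ((N : ℝ) * (1 - 2 / κ)))) t ht (fun z => ?_) x).trans ?_)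
    · refine le_trans ?_ hW
      unfold ulocNorm wnorm
      rw [if_neg ENNReal.one_ne_top]
      simp only [if_true]
      refine le_trans ?_ (le_iSup _ z)
      calc _ ≤ ∫⁻ y in Metric.ball z ρ, ENNReal.ofReal (W y) :=
            lintegral_mono_set (Metric.ball_subset_ball htρ)
        _ = _ := by
            refine lintegral_congr fun y => ?_
            rw [abs_of_nonneg (hWn y)]
    · rw [← ENNReal.ofReal_mul (by positivity)]
      apply ENNReal.ofReal_le_ofReal
      have hexp : (N : ℝ) * (1 - 2 / κ) ≤ 0 := by
        apply mul_nonpos_of_nonneg_of_nonpos hN0.le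
        rw [sub_nonpos, one_le_div hPQpos]; exact hPQ2
      have h2 : ρ ^ ((N : ℝ) * (1 - 2 / κ)) ≤ (√t) ^ ((N : ℝ) * (1 - 2 / κ)) :=
        Real.rpow_le_rpow_of_nonpos (Real.sqrt_pos.2 ht) htρ hexp
      have h3 : (√t) ^ ((N : ℝ) * (1 - 2 / κ)) * t ^ (-(N : ℝ) / 2) =
          t ^ (-(1 / (κ / N))) := by
        rw [Real.sqrt_eq_rpow, ← Real.rpow_mul ht.le, ← Real.rpow_add ht]
        congr 1
        field_simp
        ring
      calc C0 * t ^ (-(N : ℝ) / 2) * (D / C0 * ρ ^ ((N : ℝ) * (1 - 2 / κ)))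
          = D * (ρ ^ ((N : ℝ) * (1 - 2 / κ)) * t ^ (-(N : ℝ) / 2)) := by field_simp
        _ ≤ D * ((√t) ^ ((N : ℝ) * (1 - 2 / κ)) * t ^ (-(N : ℝ) / 2)) := by gcongr
        _ = _ := by rw [h3]
  have hfθ : ∀ y, ∀ e, f y ^ (θ / e) = ENNReal.ofReal (W y) ^ (1 / e) := by
    intro y e
    rw [hf]
    dsimp only
    rw [← ENNReal.rpow_mul]
    congr 1
    field_simp
  have hini : ∀ (a : ℝ) (e : ℝ) (w : ℝ), 0 ≤ a → 1 ≤ e → a ^ e ≤ w →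
      ENNReal.ofReal a ≤ ENNReal.ofReal w ^ (1 / e) := by
    intro a e w ha he haw
    have he0 : 0 < e := by linarith
    rw [one_div, ENNReal.le_rpow_inv_iff he0, ENNReal.ofReal_rpow_of_nonneg ha he0.le]
    exact ENNReal.ofReal_le_ofReal haw
  have hTS₁ : T ≤ S₁ := (min_le_right _ _).trans (min_le_left _ _)
  have hTS₂ : T ≤ S₂ := (min_le_right _ _).trans (min_le_right _ _)
  have hA := H₁ f hfm D T hDpos (min_le_left _ _) hTS₁ hF (fun y => ENNReal.ofReal (u₀ y))
    (fun y => by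
      rw [hfθ]
      exact hini _ _ _ (hu₀n y) hr₁ (le_add_of_nonneg_right (Real.rpow_nonneg (hv₀n y) _)))
  have hB := H₂ f hfm D T hDpos (min_le_right _ _) hTS₂ hF (fun y => ENNReal.ofReal (v₀ y))
    (fun y => by
      rw [hfθ]
      exact hini _ _ _ (hv₀n y) hr₂ (le_add_of_nonneg_left (Real.rpow_nonneg (hu₀n y) _)))
  obtain ⟨U, V, hUm, hVm, hU, hV, hUA, hVB⟩ := exists_fix hp hq hu₀.ennreal_ofReal
    hv₀.ennreal_ofReal T (fun x t => 2 * HH N t f x ^ (θ / r₁) + 1)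
    (fun x t => 2 * HH N t f x ^ (θ / r₂) + 1) hA hB
  have hFfin : ∀ t, 0 < t → t ≤ T → ∀ x, HH N t f x ≠ ⊤ := by
    intro t ht htT x hc
    have := hF t ht htT x
    rw [hc, ENNReal.top_rpow_of_pos hθ0] at this
    exact ENNReal.ofReal_ne_top (top_le_iff.1 this)
  have hfin : ∀ e : ℝ, 0 ≤ e → ∀ t, 0 < t → t ≤ T → ∀ x, 2 * HH N t f x ^ e + 1 ≠ ⊤ := by
    intro e he t ht htT x
    have := ENNReal.rpow_ne_top_of_nonneg he (hFfin t ht htT x)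
    exact ENNReal.add_ne_top.2 ⟨ENNReal.mul_ne_top ENNReal.ofNat_ne_top this, ENNReal.one_ne_top⟩
  have hUf : ∀ t, 0 < t → t ≤ T → ∀ x, U x t ≠ ⊤ := fun t ht htT x =>
    ne_top_of_le_ne_top (hfin _ (by positivity) t ht htT x) (hUA t ht htT x)
  have hVf : ∀ t, 0 < t → t ≤ T → ∀ x, V x t ≠ ⊤ := fun t ht htT x =>
    ne_top_of_le_ne_top (hfin _ (by positivity) t ht htT x) (hVB t ht htT x)
  refine ⟨fun x t => (U x t).toReal, fun x t => (V x t).toReal, fun _ _ => ENNReal.toReal_nonneg,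
    fun _ _ => ENNReal.toReal_nonneg, hUm.ennreal_toReal, hVm.ennreal_toReal, ?_⟩
  intro t ht htT
  refine ⟨⟨Filter.Eventually.of_forall fun x => Duh_real hp hU hUf hVf ht htT x,
    Filter.Eventually.of_forall fun x => Duh_real hq hV hVf hUf ht htT x⟩,
    Filter.Eventually.of_forall fun x => ?_⟩
  have hheat : heatS N t (fun y => W y ^ (σ / r)) x = HH N t f x := by
    rw [heatS_eq N ht]
    congr 1
    ext y
    rw [← ENNReal.ofReal_rpow_of_nonneg (hWn y) (by positivity), hf, hθdef, one_div_div]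
  have hmain : ENNReal.ofReal ((U x t).toReal ^ r₁ + (V x t).toReal ^ r₂) ≤
      ENNReal.ofReal (3 ^ r₁ + 3 ^ r₂) * HH N t f x ^ θ + ENNReal.ofReal (3 ^ r₁ + 3 ^ r₂) := by
    rw [ENNReal.ofReal_add (by positivity) (by positivity),
      ← ENNReal.ofReal_rpow_of_nonneg ENNReal.toReal_nonneg hr₁0.le,
      ← ENNReal.ofReal_rpow_of_nonneg ENNReal.toReal_nonneg hr₂0.le,
      ENNReal.ofReal_toReal (hUf t ht htT x), ENNReal.ofReal_toReal (hVf t ht htT x),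
      ENNReal.ofReal_add (p := 3 ^ r₁) (by positivity) (by positivity)]
    have g1 := (ENNReal.rpow_le_rpow (hUA t ht htT x) hr₁0.le).trans
      (pow_aux (b := θ) (by positivity) hr₁0.le (by field_simp; rfl) _)
    have g2 := (ENNReal.rpow_le_rpow (hVB t ht htT x) hr₂0.le).trans
      (pow_aux (b := θ) (by positivity) hr₂0.le (by field_simp; rfl) _)
    refine (add_le_add g1 g2).trans (le_of_eq ?_)
    ring
  rw [← hheat] at hmain
  exact hmain
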